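/- Let S(l,r) be the signed double star consisting of a positive central edge z₁z₂, together with l positive pendant edges z₁v₁,…,z₁v_l and two negative pendant edges z₁u₁, z₁u₂ attached at z₁, and r positive pendant edges z₂w₁,…,z₂w_r attached at z₂ (so S(l,r) is a (l+r+4, l+r+1, 2) signed graph). If l ≥ 2, r ≥ 2, and r is even, then S(l,r) is additively graceful. -/

import Mathlib

/-- A signed graph on vertex type `V`: a finite set of positive edges and a
finite set of negative edges, disjoint from one another, with no loops. -/
structure SignedGraph (V : Type) [DecidableEq V] where
  posEdges : Finset (Sym2 V)
  negEdges : Finset (Sym2 V)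
  disjoint : Disjoint posEdges negEdges
  pos_not_diag : ∀ e ∈ posEdges, ¬ e.IsDiag
  neg_not_diag : ∀ e ∈ negEdges, ¬ e.IsDiag

/-- Induced label on a positive edge: `|f u - f v|`. -/
def posLabel {V : Type} (f : V → ℕ) : Sym2 V → ℕ :=
  Sym2.lift ⟨fun u v => Nat.dist (f u) (f v), fun u v => Nat.dist_comm _ _⟩

/-- Induced label on a negative edge: `f u + f v`. -/
def negLabel {V : Type} (f : V → ℕ) : Sym2 V → ℕ :=
  Sym2.lift ⟨fun u v => f u + f v, fun u v => Nat.add_comm _ _⟩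

/-- `f` is an additively graceful labeling of the signed graph `S`:
it is an injection into `{0, 1, …, m + ⌈(n+1)/2⌉}` whose induced labels on the
positive edges are exactly `{1, …, m}` and on the negative edges exactly
`{1, …, n}`, where `m` (resp. `n`) is the number of positive (negative) edges.
(Note that `⌈(n+1)/2⌉ = (n+2)/2` with natural-number division.) -/
def IsAddGraceful {V : Type} [DecidableEq V] (S : SignedGraph V) (f : V → ℕ) : Prop :=
  Function.Injective f ∧
  (∀ v : V, f v ≤ S.posEdges.card + (S.negEdges.card + 2) / 2) ∧
  S.posEdges.image (posLabel f) = Finset.Icc 1 S.posEdges.card ∧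
  S.negEdges.image (negLabel f) = Finset.Icc 1 S.negEdges.card

/-- Vertex type of a double star: the two centers `z₁, z₂`, the `a` positive
pendant neighbours and `b` negative pendant neighbours of `z₁`, and the `c`
positive pendant neighbours of `z₂`. -/
abbrev DSV (a b c : ℕ) : Type := (Unit ⊕ Unit) ⊕ (Fin a ⊕ Fin b ⊕ Fin c)

/-- the first central vertex `z₁` -/
def z1 {a b c : ℕ} : DSV a b c := Sum.inl (Sum.inl ())
/-- the second central vertex `z₂` -/
def z2 {a b c : ℕ} : DSV a b c := Sum.inl (Sum.inr ())
/-- the end `vᵢ` of the `i`-th positive pendant edge at `z₁` -/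
def vv {a b c : ℕ} (i : Fin a) : DSV a b c := Sum.inr (Sum.inl i)
/-- the end `uᵢ` of the `i`-th negative pendant edge at `z₁` -/
def uu {a b c : ℕ} (i : Fin b) : DSV a b c := Sum.inr (Sum.inr (Sum.inl i))
/-- the end `wᵢ` of the `i`-th positive pendant edge at `z₂` -/
def ww {a b c : ℕ} (i : Fin c) : DSV a b c := Sum.inr (Sum.inr (Sum.inr i))

/-- The signed double star with a *positive* central edge `z₁z₂`,
`a` positive and `b` negative pendant edges at `z₁`, and `c` positive pendant
edges at `z₂`. -/
def doubleStarPos (a b c : ℕ) : SignedGraph (DSV a b c) where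
  posEdges :=
    {s(z1, z2)} ∪ Finset.univ.image (fun i : Fin a => s(z1, vv i)) ∪
      Finset.univ.image (fun i : Fin c => s(z2, ww i))
  negEdges := Finset.univ.image (fun i : Fin b => s(z1, uu i))
  disjoint := by
    rw [Finset.disjoint_left]
    intro e he1 he2
    simp only [Finset.mem_union, Finset.mem_singleton, Finset.mem_image,
      Finset.mem_univ, true_and] at he1 he2
    obtain ⟨j, rfl⟩ := he2
    rcases he1 with (h | ⟨i, h⟩) | ⟨i, h⟩ <;>
      simp [z1, z2, vv, uu, ww, Sym2.eq_iff] at h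
  pos_not_diag := by
    intro e he
    simp only [Finset.mem_union, Finset.mem_singleton, Finset.mem_image,
      Finset.mem_univ, true_and] at he
    rcases he with (rfl | ⟨i, rfl⟩) | ⟨i, rfl⟩ <;>
      simp [z1, z2, vv, ww, Sym2.mk_isDiag_iff]
  neg_not_diag := by
    intro e he
    simp only [Finset.mem_image, Finset.mem_univ, true_and] at he
    obtain ⟨i, rfl⟩ := he
    simp [z1, uu, Sym2.mk_isDiag_iff]

/-!
Put `0` on `z₁`, `m = l + r + 1` on `z₂` and `1`, `2` on `u₁`, `u₂`, so that the negative edges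
receive `1`, `2`. Then an edge `z₁v` receives the label of `v`, and an edge `z₂w` the distance of
the label of `w` from `m`. Since `r` is even, the `r - 2` smallest labels of the `w`s can be chosen
below `m` and invariant under `x ↦ m - x`, so the corresponding edges receive exactly these labels.
The labels of the `v`s fill up the rest of `{3, …, m - 1}`, and the remaining two `w`s get `m + 1`,
`m + 2`, which supply the edge labels `1`, `2`. By counting, it is enough that every required edge
label occurs.
-/

open Finset

lemma image_eq_of_surjOn_of_card_le {α β : Type*} [DecidableEq β] {s : Finset α} {t : Finset β}
    {g : α → β} (h : Set.SurjOn g s t) (hcard : #s ≤ #t) : s.image g = t :=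
  (eq_of_subset_of_card_le h.subset_finsetImage (card_image_le.trans hcard)).symm

lemma IsAddGraceful.of_surjOn {V : Type} [DecidableEq V] {S : SignedGraph V} {f : V → ℕ}
    (hinj : Function.Injective f) (hle : ∀ v, f v ≤ #S.posEdges + (#S.negEdges + 2) / 2)
    (hpos : Set.SurjOn (posLabel f) S.posEdges (Icc 1 #S.posEdges))
    (hneg : Set.SurjOn (negLabel f) S.negEdges (Icc 1 #S.negEdges)) : IsAddGraceful S f :=
  ⟨hinj, hle, image_eq_of_surjOn_of_card_le hpos (by simp),
    image_eq_of_surjOn_of_card_le hneg (by simp)⟩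

section DoubleStar

variable (a b c : ℕ)

lemma card_posEdges_doubleStarPos : #(doubleStarPos a b c).posEdges = a + c + 1 := by
  have hv : Function.Injective fun i : Fin a => (s(z1, vv i) : Sym2 (DSV a b c)) := by
    intro i j h
    simpa [z1, vv] using h
  have hw : Function.Injective fun i : Fin c => (s(z2, ww i) : Sym2 (DSV a b c)) := by
    intro i j h
    simpa [z2, ww] using h
  rw [doubleStarPos, card_union_of_disjoint, card_union_of_disjoint, card_singleton,
    card_image_of_injective _ hv, card_image_of_injective _ hw, card_fin, card_fin]
  · ring
  · simp [z1, z2, vv]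
  · simp [disjoint_left, z1, z2, vv, ww]

lemma card_negEdges_doubleStarPos : #(doubleStarPos a b c).negEdges = b := by
  have hu : Function.Injective fun i : Fin b => (s(z1, uu i) : Sym2 (DSV a b c)) := by
    intro i j h
    simpa [z1, uu] using h
  rw [doubleStarPos, card_image_of_injective _ hu, card_fin]

variable {a c} {A C : Finset ℕ} (hA : #A = a) (hC : #C = c)

/-- The labeling of the double star with `0` on `z₁`, `a + c + 1` (the number of positive edges) on
`z₂`, the elements of `A` on the `vᵢ`, `1, …, b` on the `uᵢ` and the elements of `C` on the `wᵢ`,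
each in increasing order. -/
def doubleStarLabeling : DSV a b c → ℕ :=
  Sum.elim (Sum.elim (fun _ => 0) fun _ => a + c + 1)
    (Sum.elim (A.orderEmbOfFin hA) (Sum.elim (fun i => i + 1) (C.orderEmbOfFin hC)))

variable {b}

lemma doubleStarLabeling_injective (hAC : Disjoint A C) (hb : b ≤ a + c)
    (hlt : ∀ x ∈ A ∪ C, b < x) (hcenter : a + c + 1 ∉ A ∪ C) :
    Function.Injective (doubleStarLabeling b hA hC) := by
  have hv (i) : A.orderEmbOfFin hA i ∈ A := A.orderEmbOfFin_mem hA i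
  have hw (i) : C.orderEmbOfFin hC i ∈ C := C.orderEmbOfFin_mem hC i
  have hv_lt (i) : b < A.orderEmbOfFin hA i := hlt _ (mem_union_left _ (hv i))
  have hw_lt (i) : b < C.orderEmbOfFin hC i := hlt _ (mem_union_right _ (hw i))
  have hu : Function.Injective fun i : Fin b => (i + 1 : ℕ) :=
    Nat.succ_injective.comp Fin.val_injective
  have huw := hu.sumElim (C.orderEmbOfFin hC).injective fun i j => by grind
  have hpendant := (A.orderEmbOfFin hA).injective.sumElim huw <| by
    rintro i (j | j)
    · grind
    · exact disjoint_iff_ne.1 hAC _ (hv i) _ (hw j)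
  refine Function.Injective.sumElim ?_ hpendant ?_
  · rintro (_ | _) (_ | _) <;> simp
  · rintro (_ | _) (i | i | i) <;> grind

lemma doubleStarLabeling_le {N : ℕ} (hm : a + c + 1 ≤ N) (hb : b ≤ N)
    (hle : ∀ x ∈ A ∪ C, x ≤ N) (v : DSV a b c) : doubleStarLabeling b hA hC v ≤ N := by
  rcases v with (_ | _) | (i | i | i)
  · exact Nat.zero_le N
  · exact hm
  · exact hle _ (mem_union_left _ (A.orderEmbOfFin_mem hA i))
  · exact Nat.le_trans i.isLt hb
  · exact hle _ (mem_union_right _ (C.orderEmbOfFin_mem hC i))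

lemma mem_image_posLabel_of_mem {x : ℕ} (hx : x ∈ A) :
    x ∈ posLabel (doubleStarLabeling b hA hC) '' (doubleStarPos a b c).posEdges := by
  obtain ⟨i, rfl⟩ : x ∈ Set.range (A.orderEmbOfFin hA) := by simpa using hx
  exact ⟨s(z1, vv i), by simp [doubleStarPos, vv], Nat.dist_zero_left _⟩

lemma dist_mem_image_posLabel_of_mem {x : ℕ} (hx : x ∈ C) :
    Nat.dist (a + c + 1) x ∈
      posLabel (doubleStarLabeling b hA hC) '' (doubleStarPos a b c).posEdges := by
  obtain ⟨i, rfl⟩ : x ∈ Set.range (C.orderEmbOfFin hC) := by simpa using hx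
  exact ⟨s(z2, ww i), by simp [doubleStarPos, ww], rfl⟩

lemma surjOn_posLabel_doubleStarLabeling
    (hcover : ∀ d ∈ Icc 1 (a + c), d ∈ A ∨ a + c + 1 - d ∈ C ∨ a + c + 1 + d ∈ C) :
    Set.SurjOn (posLabel (doubleStarLabeling b hA hC)) (doubleStarPos a b c).posEdges
      (Icc 1 (a + c + 1)) := by
  intro d hd
  obtain ⟨hd_pos, hd_le⟩ : 1 ≤ d ∧ d ≤ a + c + 1 := by simpa using hd
  obtain rfl | hd_lt := hd_le.eq_or_lt
  · exact ⟨s(z1, z2), by simp [doubleStarPos], Nat.dist_zero_left _⟩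
  obtain hdA | hdC | hdC := hcover d (mem_Icc.2 ⟨hd_pos, Nat.lt_succ_iff.1 hd_lt⟩)
  · exact mem_image_posLabel_of_mem hA hC hdA
  · have hdist : Nat.dist (a + c + 1) (a + c + 1 - d) = d := by
      rw [Nat.dist_eq_sub_of_le_right (Nat.sub_le _ _), Nat.sub_sub_self hd_le]
    exact hdist ▸ dist_mem_image_posLabel_of_mem hA hC hdC
  · have hdist : Nat.dist (a + c + 1) (a + c + 1 + d) = d := by
      rw [Nat.dist_eq_sub_of_le (Nat.le_add_right _ _), Nat.add_sub_cancel_left]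
    exact hdist ▸ dist_mem_image_posLabel_of_mem hA hC hdC

lemma surjOn_negLabel_doubleStarLabeling :
    Set.SurjOn (negLabel (doubleStarLabeling b hA hC)) (doubleStarPos a b c).negEdges
      (Icc 1 b) := by
  intro d hd
  obtain ⟨hd_pos, hd_le⟩ : 1 ≤ d ∧ d ≤ b := by simpa using hd
  refine ⟨s(z1, uu ⟨d - 1, by omega⟩), by simp [doubleStarPos, uu], ?_⟩
  change 0 + (d - 1 + 1) = d
  omega

theorem isAddGraceful_doubleStarLabeling (hAC : Disjoint A C) (hb : b ≤ a + c)
    (hlt : ∀ x ∈ A ∪ C, b < x) (hle : ∀ x ∈ A ∪ C, x ≤ a + c + 1 + (b + 2) / 2)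
    (hcenter : a + c + 1 ∉ A ∪ C)
    (hcover : ∀ d ∈ Icc 1 (a + c), d ∈ A ∨ a + c + 1 - d ∈ C ∨ a + c + 1 + d ∈ C) :
    IsAddGraceful (doubleStarPos a b c) (doubleStarLabeling b hA hC) := by
  apply IsAddGraceful.of_surjOn
  · exact doubleStarLabeling_injective hA hC hAC hb hlt hcenter
  · rw [card_posEdges_doubleStarPos, card_negEdges_doubleStarPos]
    exact doubleStarLabeling_le hA hC (by omega) (by omega) hle
  · rw [card_posEdges_doubleStarPos]
    exact surjOn_posLabel_doubleStarLabeling hA hC hcover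
  · rw [card_negEdges_doubleStarPos]
    exact surjOn_negLabel_doubleStarLabeling hA hC

end DoubleStar

section TwoNegativeEdges

variable (n k : ℕ)

/-- The labels of the `vᵢ` in the double star with `l = n + 2` and `r = 2 * k + 2`: a block of
length `n` symmetric about `m / 2`, where `m = n + 2 * k + 5`, together with `m - 2` and `m - 1`. -/
def leftLabels : Finset ℕ :=
  Ico (k + 3) (k + n + 3) ∪ Ico (2 * k + n + 3) (2 * k + n + 5)

/-- The labels of the `wᵢ` in the double star with `l = n + 2` and `r = 2 * k + 2`: two blocks of
length `k` exchanged by `x ↦ m - x`, where `m = n + 2 * k + 5`, together with `m + 1` and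
`m + 2`. -/
def rightLabels : Finset ℕ :=
  Ico 3 (k + 3) ∪ Ico (k + n + 3) (2 * k + n + 3) ∪ Ico (2 * k + n + 6) (2 * k + n + 8)

variable {n k} in
lemma mem_leftLabels {x : ℕ} : x ∈ leftLabels n k ↔
    (k + 3 ≤ x ∧ x < k + n + 3) ∨ (2 * k + n + 3 ≤ x ∧ x < 2 * k + n + 5) := by
  simp [leftLabels]

variable {n k} in
lemma mem_rightLabels {x : ℕ} : x ∈ rightLabels n k ↔
    (3 ≤ x ∧ x < k + 3) ∨ (k + n + 3 ≤ x ∧ x < 2 * k + n + 3) ∨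
      (2 * k + n + 6 ≤ x ∧ x < 2 * k + n + 8) := by
  simp [rightLabels]

lemma card_leftLabels : #(leftLabels n k) = n + 2 := by
  rw [leftLabels, card_union_of_disjoint, Nat.card_Ico, Nat.card_Ico]
  · omega
  · rw [disjoint_left]
    grind

lemma card_rightLabels : #(rightLabels n k) = 2 * k + 2 := by
  rw [rightLabels, card_union_of_disjoint, card_union_of_disjoint, Nat.card_Ico, Nat.card_Ico,
    Nat.card_Ico]
  · omega
  all_goals
    rw [disjoint_left]
    grind

lemma disjoint_leftLabels_rightLabels : Disjoint (leftLabels n k) (rightLabels n k) := by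
  simp only [disjoint_left, mem_leftLabels, mem_rightLabels]
  omega

variable {n k} in
lemma mem_leftLabels_or_mem_rightLabels {d : ℕ} (hd : d ∈ Icc 1 (n + 2 + (2 * k + 2))) :
    d ∈ leftLabels n k ∨ n + 2 + (2 * k + 2) + 1 - d ∈ rightLabels n k ∨
      n + 2 + (2 * k + 2) + 1 + d ∈ rightLabels n k := by
  simp only [mem_Icc, mem_leftLabels, mem_rightLabels] at hd ⊢
  omega

end TwoNegativeEdges

/-- The signed double star with positive central edge `z₁z₂`,
`l` positive and `2` negative pendant edges at `z₁`, and `r` positive pendant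
edges at `z₂`, is additively graceful when `l ≥ 2`, `r ≥ 2` and `r` is even. -/
theorem doubleStar_twoNeg_addGraceful_of_even_r (l r : ℕ) (hl : 2 ≤ l) (hr : 2 ≤ r)
    (hre : Even r) :
    ∃ f : DSV l 2 r → ℕ, IsAddGraceful (doubleStarPos l 2 r) f := by
  obtain ⟨n, rfl⟩ : ∃ n, l = n + 2 := Nat.exists_eq_add_of_le' hl
  obtain ⟨k, rfl⟩ : ∃ k, r = 2 * k + 2 := by
    obtain ⟨t, rfl⟩ := hre
    exact ⟨t - 1, by omega⟩
  refine ⟨doubleStarLabeling 2 (card_leftLabels n k) (card_rightLabels n k),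
    isAddGraceful_doubleStarLabeling _ _ (disjoint_leftLabels_rightLabels n k) (by omega)
      ?_ ?_ ?_ fun d => mem_leftLabels_or_mem_rightLabels⟩
  all_goals
    simp only [mem_union, mem_leftLabels, mem_rightLabels]
    omega
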